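/- Set R_n(x) = L(x)^T·P_n(x)·Γ_n^{-1}. Then conjugation by L^T decouples the first matrix q-difference operator: for every n ∈ ℕ and every z ∈ ℂ with z ∉ {0,1,-1}, K_1(z)·R_n(μ(qz)) + K_1(z⁻¹)·R_n(μ(q⁻¹z)) = R_n(μ(z))·Λ_n(1), where μ(w) = (w+w⁻¹)/2 and K_1(z) is the diagonal matrix K_1(z) = Σ_{i=0}^{2ℓ} [q^{1-i}/(1-q²)²]·[(1-q^{2i+2}z²)/(1-z²)]·E_{i,i}. -/

import Mathlib

open Finset Polynomial MeasureTheory Matrix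
open scoped BigOperators ComplexOrder

noncomputable section

/-- q-shifted factorial `(a;p)_n`. -/
def qp (a p : ℂ) (n : ℕ) : ℂ := ∏ j ∈ Finset.range n, (1 - a * p ^ j)

/-- q-Racah polynomial `R_n(μ(x);α,β,γ,δ;p)`. -/
def qRacah (p α β γ δ : ℂ) (n x : ℕ) : ℂ :=
  ∑ k ∈ Finset.range (min n x + 1),
    qp (p ^ (-(n : ℤ))) p k * qp (α * β * p ^ (n + 1)) p k *
        qp (p ^ (-(x : ℤ))) p k * qp (γ * δ * p ^ (x + 1)) p k /
      (qp (α * p) p k * qp (β * δ * p) p k * qp (γ * p) p k * qp p p k) * p ^ k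

/-- `IsUltra C` says that for each base `p`, parameter `β` and degree `n`, `C p β n` is
the continuous q-ultraspherical polynomial: it has degree at most `n` and its values at
`(z+z⁻¹)/2` are given by the symmetric Laurent sum. -/
def IsUltra (C : ℂ → ℂ → ℕ → Polynomial ℂ) : Prop :=
  ∀ (p β : ℂ) (n : ℕ),
    (C p β n).degree ≤ (n : ℕ) ∧
      ∀ z : ℂ, z ≠ 0 →
        (C p β n).eval ((z + z⁻¹) / 2) =
          ∑ r ∈ Finset.range (n + 1),
            qp β p r * qp β p (n - r) / (qp p p r * qp p p (n - r)) * z ^ ((n : ℤ) - 2 * r)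

/-- The matrix-valued polynomial `P_n` (entries in `Polynomial ℂ`); here `L = 2ℓ`. -/
def Pm (q : ℂ) (L : ℕ) (C : ℂ → ℂ → ℕ → Polynomial ℂ) (n : ℕ) :
    Matrix (Fin (L + 1)) (Fin (L + 1)) (Polynomial ℂ) :=
  Matrix.of fun i j =>
    ∑ k ∈ Finset.Icc (i : ℕ) (min L (n + (j : ℕ))),
      Polynomial.C
          ((-1 : ℂ) ^ k *
            q ^ ((n : ℤ) + (2 * (k : ℤ) + 1) * ((k : ℤ) - ((i : ℕ) : ℤ)) +
                ((j : ℕ) : ℤ) * (2 * (k : ℤ) + 1) + 2 * (k : ℤ) * ((L : ℤ) + (n : ℤ) + 1) -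
                (k : ℤ) ^ 2) *
            (qp (q ^ 2) (q ^ 2) k * qp (q ^ 2) (q ^ 2) (k + (i : ℕ)) /
              (qp (q ^ 2) (q ^ 2) (2 * k) * qp (q ^ 2) (q ^ 2) (i : ℕ))) *
            (qp (q ^ (-(2 * (L : ℤ)))) (q ^ 2) k *
                qp (q ^ (-(2 * ((j : ℕ) : ℤ) + 2 * (n : ℤ)))) (q ^ 2) k /
              (qp (q ^ 2) (q ^ 2) k * qp (q ^ (2 * (L : ℤ) + 4)) (q ^ 2) k)) *
            (qp (q ^ 2) (q ^ 2) (n + (j : ℕ) - k) /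
              qp (q ^ (4 * (k : ℤ) + 4)) (q ^ 2) (n + (j : ℕ) - k)) *
            qRacah (q ^ 2) 1 1 (q ^ (-(2 * (n : ℤ) + 2 * ((j : ℕ) : ℤ) + 2)))
              (q ^ (-(2 * (L : ℤ) + 2))) k (j : ℕ)) *
        (C (q ^ 2) (q ^ (-(2 * (k : ℤ)))) (k - (i : ℕ)) *
          C (q ^ 2) (q ^ (2 * (k : ℤ) + 2)) (n + (j : ℕ) - k))

/-- Evaluation of the matrix-valued polynomial `P_n` at a point. -/
def evP (q : ℂ) (L : ℕ) (C : ℂ → ℂ → ℕ → Polynomial ℂ) (n : ℕ) (x : ℂ) :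
    Matrix (Fin (L + 1)) (Fin (L + 1)) ℂ :=
  (Pm q L C n).map (Polynomial.eval x)

/-- The coefficients `α_t(m,n)` of the weight. -/
def alphaC (q : ℂ) (L m n t : ℕ) : ℂ :=
  q ^ (2 * (n : ℤ) * ((L : ℤ) + 1) - (n : ℤ) ^ 2 - (2 * (L : ℤ) + 3) * (t : ℤ) + (t : ℤ) ^ 2 -
      (L : ℤ) + (m : ℤ)) *
    ((1 - q ^ (2 * (L : ℤ) + 2)) / (1 - q ^ (2 * (m : ℤ) + 2))) *
    (qp (q ^ 2) (q ^ 2) (L - n) * qp (q ^ 2) (q ^ 2) n / qp (q ^ 2) (q ^ 2) L) *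
    ((-1 : ℂ) ^ ((m : ℤ) - (t : ℤ)) * qp (q ^ (2 * (m : ℤ) - 2 * (L : ℤ))) (q ^ 2) (n - t) /
      qp (q ^ (2 * (m : ℤ) + 4)) (q ^ 2) (n - t)) *
    (qp (q ^ (2 * (L : ℤ) + 4 - 2 * (t : ℤ))) (q ^ 2) t / qp (q ^ 2) (q ^ 2) t)

/-- The matrix weight `W(x)`. -/
def Wm (q : ℂ) (L : ℕ) (x : ℂ) : Matrix (Fin (L + 1)) (Fin (L + 1)) ℂ :=
  Matrix.of fun i j =>
    ∑ t ∈ Finset.range (max (i : ℕ) (j : ℕ) + 1),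
      alphaC q L (min (i : ℕ) (j : ℕ)) (max (i : ℕ) (j : ℕ)) t *
        (Polynomial.Chebyshev.U ℂ
            ((min (i : ℕ) (j : ℕ) : ℤ) + (max (i : ℕ) (j : ℕ) : ℤ) - 2 * (t : ℤ))).eval x

/-- The antidiagonal involution `J`. -/
def Jm (L : ℕ) : Matrix (Fin (L + 1)) (Fin (L + 1)) ℂ :=
  Matrix.of fun i j => if (i : ℕ) + (j : ℕ) = L then 1 else 0

/-- The diagonal leading-coefficient matrix `Γ_n`. -/
def Gam (q : ℂ) (L n : ℕ) : Matrix (Fin (L + 1)) (Fin (L + 1)) ℂ :=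
  Matrix.diagonal fun i =>
    2 ^ n * q ^ n * qp (q ^ (2 * ((i : ℕ) : ℤ) + 2)) (q ^ 2) n *
        qp (q ^ (2 * (L : ℤ) - 2 * ((i : ℕ) : ℤ) + 2)) (q ^ 2) n /
      (qp (q ^ 2) (q ^ 2) n * qp (q ^ (2 * (L : ℤ) + 4)) (q ^ 2) n)

/-- The squared-norm matrix `G_m`. -/
def Gmat (q : ℂ) (L m : ℕ) : Matrix (Fin (L + 1)) (Fin (L + 1)) ℂ :=
  Matrix.diagonal fun i =>
    q ^ (2 * (m : ℤ) - (L : ℤ)) * (1 - q ^ (2 * (L : ℤ) + 2)) ^ 2 /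
      ((1 - q ^ (2 * (m : ℤ) + 2 * ((i : ℕ) : ℤ) + 2)) *
        (1 - q ^ (2 * (L : ℤ) - 2 * ((i : ℕ) : ℤ) + 2 * (m : ℤ) + 2)))

/-- The unipotent lower triangular matrix `L(x)` of the LDU decomposition. -/
def Lm (q : ℂ) (L : ℕ) (C : ℂ → ℂ → ℕ → Polynomial ℂ) (x : ℂ) :
    Matrix (Fin (L + 1)) (Fin (L + 1)) ℂ :=
  Matrix.of fun m k =>
    if (k : ℕ) ≤ (m : ℕ) then
      q ^ (((m : ℕ) : ℤ) - ((k : ℕ) : ℤ)) * qp (q ^ 2) (q ^ 2) (m : ℕ) *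
          qp (q ^ 2) (q ^ 2) (2 * (k : ℕ) + 1) /
          (qp (q ^ 2) (q ^ 2) ((m : ℕ) + (k : ℕ) + 1) * qp (q ^ 2) (q ^ 2) (k : ℕ)) *
        (C (q ^ 2) (q ^ (2 * (k : ℕ) + 2)) ((m : ℕ) - (k : ℕ))).eval x
    else 0

/-- The claimed inverse of `L(x)`. -/
def Linv (q : ℂ) (L : ℕ) (C : ℂ → ℂ → ℕ → Polynomial ℂ) (x : ℂ) :
    Matrix (Fin (L + 1)) (Fin (L + 1)) ℂ :=
  Matrix.of fun k n =>
    if (n : ℕ) ≤ (k : ℕ) then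
      q ^ ((2 * ((k : ℕ) : ℤ) + 1) * (((k : ℕ) : ℤ) - ((n : ℕ) : ℤ))) *
          qp (q ^ 2) (q ^ 2) (k : ℕ) * qp (q ^ 2) (q ^ 2) ((k : ℕ) + (n : ℕ)) /
          (qp (q ^ 2) (q ^ 2) (2 * (k : ℕ)) * qp (q ^ 2) (q ^ 2) (n : ℕ)) *
        (C (q ^ 2) (q ^ (-(2 * ((k : ℕ) : ℤ)))) ((k : ℕ) - (n : ℕ))).eval x
    else 0

/-- The constants `c_k(ℓ)`. -/
def ckC (q : ℂ) (L k : ℕ) : ℂ :=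
  q ^ (-(L : ℤ)) / 4 * (1 - q ^ (4 * k + 2)) * qp (q ^ 2) (q ^ 2) (L + k + 1) *
      qp (q ^ 2) (q ^ 2) (L - k) * qp (q ^ 2) (q ^ 2) k ^ 4 /
    (qp (q ^ 2) (q ^ 2) (2 * k + 1) ^ 2 * qp (q ^ 2) (q ^ 2) L ^ 2)

/-- The diagonal part `T(x)` of the LDU decomposition. -/
def Tm (q : ℂ) (L : ℕ) (x : ℂ) : Matrix (Fin (L + 1)) (Fin (L + 1)) ℂ :=
  Matrix.diagonal fun k =>
    ckC q L (k : ℕ) *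
      (4 * ∏ j ∈ Finset.Icc 1 (k : ℕ), (1 - 2 * (2 * x ^ 2 - 1) * q ^ (2 * j) + q ^ (4 * j)))

/-- The coefficient matrix `M₁(z)` of the q-difference operator `D₁`. -/
def M1f (q : ℂ) (L : ℕ) (z : ℂ) : Matrix (Fin (L + 1)) (Fin (L + 1)) ℂ :=
  Matrix.of fun i j =>
    if (j : ℕ) = (i : ℕ) + 1 then
      -(q ^ (1 - ((i : ℕ) : ℤ)) * (1 - q ^ (2 * (i : ℕ) + 2)) / (1 - q ^ 2) ^ 2 *
        (z / (1 - z ^ 2)))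
    else if (j : ℕ) = (i : ℕ) then
      q ^ (1 - ((i : ℕ) : ℤ)) / (1 - q ^ 2) ^ 2 *
        ((1 - q ^ (2 * (i : ℕ) + 2) * z ^ 2) / (1 - z ^ 2))
    else 0

/-- `M₂(z) = J M₁(z) J`. -/
def M2f (q : ℂ) (L : ℕ) (z : ℂ) : Matrix (Fin (L + 1)) (Fin (L + 1)) ℂ :=
  Jm L * M1f q L z * Jm L

/-- The eigenvalue matrix `Λ_n(1)`. -/
def Lam1 (q : ℂ) (L n : ℕ) : Matrix (Fin (L + 1)) (Fin (L + 1)) ℂ :=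
  Matrix.diagonal fun j =>
    (q ^ (-((j : ℕ) : ℤ) - (n : ℤ) - 1) + q ^ (((j : ℕ) : ℤ) + (n : ℤ) + 1)) / (q⁻¹ - q) ^ 2

/-- The eigenvalue matrix `Λ_n(2) = J Λ_n(1) J`. -/
def Lam2 (q : ℂ) (L n : ℕ) : Matrix (Fin (L + 1)) (Fin (L + 1)) ℂ :=
  Jm L * Lam1 q L n * Jm L

/-- The diagonal coefficient matrix `K₁(z)` of the decoupled operator. -/
def K1f (q : ℂ) (L : ℕ) (z : ℂ) : Matrix (Fin (L + 1)) (Fin (L + 1)) ℂ :=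
  Matrix.diagonal fun i =>
    q ^ (1 - ((i : ℕ) : ℤ)) / (1 - q ^ 2) ^ 2 *
      ((1 - q ^ (2 * (i : ℕ) + 2) * z ^ 2) / (1 - z ^ 2))

/-- The symmetric Laurent polynomial `Ĉ_k(z;β|p)`. -/
def Chat (p β : ℂ) (k : ℕ) (z : ℂ) : ℂ :=
  ∑ r ∈ Finset.range (k + 1),
    qp β p r * qp β p (k - r) / (qp p p r * qp p p (k - r)) * z ^ ((k : ℤ) - 2 * (r : ℤ))

/-- The matrix polynomials `R_n(x) = L(x)ᵀ P_n(x) Γ_n⁻¹`. -/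
def Rmat (q : ℂ) (L : ℕ) (C : ℂ → ℂ → ℕ → Polynomial ℂ) (n : ℕ) (x : ℂ) :
    Matrix (Fin (L + 1)) (Fin (L + 1)) ℂ :=
  (Lm q L C x)ᵀ * evP q L C n x * (Gam q L n)⁻¹


section aux
open PowerSeries (coeff rescale)

theorem qp_succ' (a p : ℂ) (n : ℕ) : qp a p (n+1) = qp a p n * (1 - a * p ^ n) := by
  simp [qp, Finset.prod_range_succ]

theorem qp_succ_left (a p : ℂ) (n : ℕ) : qp a p (n+1) = (1 - a) * qp (p * a) p n := by
  simp only [qp, Finset.prod_range_succ']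
  rw [mul_comm]; congr 1
  · simp
  · apply Finset.prod_congr rfl; intros; ring

theorem qp_add (p : ℂ) (c n : ℕ) : qp p p (c + n) = qp p p c * qp (p ^ (c+1)) p n := by
  simp only [qp, Finset.prod_range_add]
  congr 1
  apply Finset.prod_congr rfl; intros; ring

/-- linear factor -/
def lin (c : ℂ) : PowerSeries ℂ := 1 - PowerSeries.C c * PowerSeries.X

theorem coeff_lin_zero (c : ℂ) (f : PowerSeries ℂ) : coeff 0 (lin c * f) = coeff 0 f := by
  simp [lin, sub_mul, mul_assoc]

theorem coeff_lin_succ (c : ℂ) (f : PowerSeries ℂ) (n : ℕ) :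
    coeff (n+1) (lin c * f) = coeff (n+1) f - c * coeff n f := by
  simp [lin, sub_mul, mul_assoc, PowerSeries.coeff_succ_X_mul]

/-- product of linear factors -/
def qX (p c : ℂ) (n : ℕ) : PowerSeries ℂ := ∏ j ∈ Finset.range n, lin (c * p ^ j)

theorem qX_add (p c : ℂ) (m n : ℕ) : qX p c (m + n) = qX p c m * qX p (c * p ^ m) n := by
  simp only [qX, Finset.prod_range_add]
  congr 1
  apply Finset.prod_congr rfl; intros; congr 1; ring

theorem qX_succ (p c : ℂ) (n : ℕ) : qX p c (n+1) = qX p c n * lin (c * p ^ n) := by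
  simp [qX, Finset.prod_range_succ]

theorem qX_succ_left (p c : ℂ) (n : ℕ) : qX p c (n+1) = lin c * qX p (p * c) n := by
  rw [add_comm, qX_add]; simp [qX, mul_comm]

theorem rescale_lin (p c : ℂ) : rescale p (lin c) = lin (p * c) := by
  ext n
  rw [PowerSeries.coeff_rescale]
  have h : lin c = lin c * 1 := (mul_one _).symm
  have h' : lin (p*c) = lin (p*c) * 1 := (mul_one _).symm
  rw [h, h']
  rcases n with _ | n
  · rw [coeff_lin_zero, coeff_lin_zero]; simp
  · rw [coeff_lin_succ, coeff_lin_succ]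
    rcases n with _ | n
    · simp [PowerSeries.coeff_one]
    · simp [PowerSeries.coeff_one]

theorem rescale_qX (p c : ℂ) (n : ℕ) : rescale p (qX p c n) = qX p (p * c) n := by
  simp only [qX, map_prod, rescale_lin, mul_assoc]

/-- q-binomial series -/
def phi (p β c : ℂ) : PowerSeries ℂ := PowerSeries.mk fun n => qp β p n / qp p p n * c ^ n

theorem phi_step (p β c : ℂ) (hp : ∀ n, qp p p n ≠ 0) :
    phi p β c = lin (β * c) * phi p (p * β) c := by
  ext n
  rcases n with _ | n
  · rw [coeff_lin_zero]; simp [phi, qp]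
  · rw [coeff_lin_succ]
    simp only [phi, PowerSeries.coeff_mk]
    rw [qp_succ_left β, qp_succ' (p * β)]
    have h1 := hp n
    have h2 := hp (n+1)
    rw [qp_succ'] at h2 ⊢
    have h3 := right_ne_zero_of_mul h2
    field_simp
    ring

theorem phi_one (p c : ℂ) : phi p 1 c = 1 := by
  ext n
  rcases n with _ | n
  · simp [phi, qp]
  · simp [phi, qp_succ_left, PowerSeries.coeff_one]

theorem phi_pos (p c : ℂ) (hp : ∀ n, qp p p n ≠ 0) (b : ℕ) : qX p c b * phi p (p ^ b) c = 1 := by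
  induction b with
  | zero => simp [phi_one, qX]
  | succ b ih =>
    rw [phi_step p _ c hp] at ih
    rw [qX_succ, ← ih, pow_succ', mul_comm c, mul_assoc]

theorem phi_neg (p : ℂ) (hp : ∀ n, qp p p n ≠ 0) (p0 : p ≠ 0) (k : ℕ) (c : ℂ) :
    phi p (p⁻¹ ^ k) (p ^ k * c) = qX p c k := by
  induction k generalizing c with
  | zero => simp [phi_one, qX]
  | succ k ih =>
    rw [phi_step p _ _ hp, qX_succ_left, ← ih]
    congr 2
    · rw [← mul_assoc, ← mul_pow, inv_mul_cancel₀ p0]; simp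
    · rw [pow_succ']; field_simp
    · ring

theorem phi_mul (p : ℂ) (hp : ∀ n, qp p p n ≠ 0) (p0 : p ≠ 0) (i M b : ℕ) (c : ℂ) (hi : i ≤ M) :
    phi p (p⁻¹ ^ (M + b)) (p ^ (M+b) * c) * phi p (p ^ b) (c * p ^ i) =
      qX p c i * qX p (c * p ^ (i + b)) (M - i) := by
  rw [phi_neg p hp p0]
  have : M + b = i + (b + (M - i)) := by omega
  rw [this, qX_add, qX_add]
  have := phi_pos p (c * p ^ i) hp b
  rw [mul_assoc c, ← pow_add] 
  calc _ = qX p c i * qX p (c * p ^ (i + b)) (M - i) * (qX p (c * p ^ i) b * phi p (p ^ b) (c * p ^ i)) := by ring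
    _ = _ := by rw [this, mul_one]

theorem phi_phi (p β z : ℂ) (hz : z ≠ 0) (n : ℕ) :
    coeff n (phi p β z * phi p β z⁻¹) = Chat p β n z := by
  rw [PowerSeries.coeff_mul, Chat, ← Finset.sum_flip,
    Finset.Nat.sum_antidiagonal_eq_sum_range_succ_mk]
  apply Finset.sum_congr rfl
  intro r hr
  have hr : r ≤ n := by simp at hr; omega
  simp only [phi, PowerSeries.coeff_mk]
  have e : ((n:ℤ) - 2 * ((n - r : ℕ) : ℤ)) = r - ((n - r : ℕ) : ℤ) := by omega
  have e2 : n - (n - r) = r := by omega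
  rw [e, e2, zpow_sub₀ hz, zpow_natCast, zpow_natCast, inv_pow]
  field_simp

/-- coefficients of the q-Pochhammer symbol -/
def ec (p : ℂ) : ℕ → ℕ → ℂ
  | 0, 0 => 1
  | 0, _ + 1 => 0
  | M + 1, 0 => ec p M 0
  | M + 1, i + 1 => ec p M (i + 1) - p ^ M * ec p M i

theorem ec_zero (p : ℂ) (M i : ℕ) (h : M < i) : ec p M i = 0 := by
  induction M generalizing i with
  | zero => obtain ⟨i, rfl⟩ : ∃ j, i = j + 1 := ⟨i - 1, by omega⟩; simp [ec]
  | succ M ih =>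
    obtain ⟨i, rfl⟩ : ∃ j, i = j + 1 := ⟨i - 1, by omega⟩
    simp [ec, ih i (by omega), ih (i+1) (by omega)]

theorem ec_sum {V : Type*} [AddCommGroup V] [Module ℂ V] (p : ℂ) (M : ℕ) (g : ℕ → V) :
    ∑ i ∈ Finset.range (M + 2), ec p (M + 1) i • g i =
      ∑ i ∈ Finset.range (M + 1), ec p M i • g i -
        p ^ M • ∑ i ∈ Finset.range (M + 1), ec p M i • g (i+1) := by
  have h : ∑ i ∈ Finset.range (M + 1), ec p M i • g i = ∑ i ∈ Finset.range (M + 2), ec p M i • g i := by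
    rw [Finset.sum_range_succ _ (M+1), ec_zero p M (M+1) (by omega)]; simp
  rw [h, Finset.sum_range_succ', Finset.sum_range_succ' _ (M+1)]
  simp only [ec, sub_smul, Finset.sum_sub_distrib, Finset.smul_sum, mul_smul]
  abel

theorem ec_qp (p y : ℂ) (M : ℕ) : ∑ i ∈ Finset.range (M + 1), ec p M i • y ^ i = qp y p M := by
  induction M with
  | zero => simp [ec, qp]
  | succ M ih =>
    rw [ec_sum, qp_succ', ← ih]
    simp only [pow_succ, smul_eq_mul, ← mul_assoc, ← Finset.sum_mul]
    ring

/-- the summand factor -/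
def GG (p : ℂ) (b M : ℕ) (c : ℂ) (i : ℕ) : PowerSeries ℂ := qX p c i * qX p (c * p ^ (i + b)) (M - i)

/-- the sum -/
def SS (p : ℂ) (b M : ℕ) (c d : ℂ) : PowerSeries ℂ :=
  ∑ i ∈ Finset.range (M + 1), ec p M i • ((p ^ (2 * b * i)) • (GG p b M c i * GG p b M d i))

theorem GG_a (p : ℂ) (b M : ℕ) (c : ℂ) (i : ℕ) (h : i ≤ M) :
    GG p b (M+1) c i = lin (c * p ^ (M + b)) * GG p b M c i := by
  unfold GG
  have : M + 1 - i = (M - i) + 1 := by omega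
  rw [this, qX_succ, mul_assoc c, ← pow_add, show i + b + (M - i) = M + b by omega]
  ring

theorem GG_b (p : ℂ) (b M : ℕ) (c : ℂ) (i : ℕ) :
    GG p b (M+1) c (i+1) = lin c * GG p b M (p * c) i := by
  unfold GG
  rw [qX_succ_left, show M + 1 - (i + 1) = M - i by omega,
    show c * p ^ (i + 1 + b) = p * c * p ^ (i + b) by ring, mul_assoc]

theorem SS_step (p : ℂ) (b M : ℕ) (c d : ℂ) :
    SS p b (M+1) c d = lin (c * p ^ (M + b)) * (lin (d * p ^ (M + b)) * SS p b M c d) -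
      (p ^ (M + 2 * b)) • (lin c * (lin d * SS p b M (p * c) (p * d))) := by
  unfold SS
  rw [ec_sum]
  congr 1
  · simp only [Finset.mul_sum]
    apply Finset.sum_congr rfl
    intro i hi
    rw [GG_a _ _ _ _ _ (by simp at hi; omega), GG_a _ _ _ _ _ (by simp at hi; omega)]
    simp only [mul_smul_comm]
    congr 2
    ring
  · simp only [Finset.mul_sum, Finset.smul_sum]
    apply Finset.sum_congr rfl
    intro i hi
    rw [GG_b, GG_b]
    simp only [mul_smul_comm, smul_smul]
    congr 1
    · ring
    · ring

theorem rescale_CC (p a : ℂ) : rescale p (PowerSeries.C a) = PowerSeries.C a := by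
  ext n
  rw [PowerSeries.coeff_rescale, PowerSeries.coeff_C]
  split_ifs with h
  · simp [h]
  · simp

theorem SS_rescale (p : ℂ) (b M : ℕ) (c d : ℂ) (n : ℕ) :
    coeff n (SS p b M (p * c) (p * d)) = p ^ n * coeff n (SS p b M c d) := by
  rw [← PowerSeries.coeff_rescale]
  congr 1
  unfold SS GG
  simp only [PowerSeries.smul_eq_C_mul, map_sum, map_mul, rescale_qX, rescale_CC, mul_assoc]

theorem SS_deg (p : ℂ) (b M : ℕ) (c d : ℂ) (n : ℕ) (h : M < n) : coeff n (SS p b M c d) = 0 := by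
  induction M generalizing n with
  | zero =>
    obtain ⟨n, rfl⟩ : ∃ j, n = j + 1 := ⟨n - 1, by omega⟩
    simp [SS, GG, qX, PowerSeries.coeff_one]
  | succ M ih =>
    obtain ⟨n, rfl⟩ : ∃ j, n = j + 2 := ⟨n - 2, by omega⟩
    rw [SS_step]
    simp only [map_sub, PowerSeries.coeff_smul, coeff_lin_succ, SS_rescale]
    rw [ih (n+2) (by omega), ih (n+1) (by omega)]
    rcases Nat.lt_or_ge M n with h1 | h1
    · rw [ih n h1]; simp
    · obtain rfl : n = M := by omega
      simp only [smul_eq_mul]; ring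

theorem phi_rescale (p β c t : ℂ) : phi p β (t * c) = rescale t (phi p β c) := by
  ext n
  simp only [phi, PowerSeries.coeff_rescale, PowerSeries.coeff_mk]; ring

theorem key (p : ℂ) (hp : ∀ n, qp p p n ≠ 0) (p0 : p ≠ 0) (z : ℂ) (hz : z ≠ 0) (M b : ℕ) :
    ∑ s ∈ Finset.range (M + 2), p ^ ((M+b) * (M + 1 - s)) * Chat p (p⁻¹ ^ (M+b)) (M+1-s) z *
      qp (p ^ (2 * b + s)) p M * Chat p (p ^ b) s z = 0 := by
  have h := SS_deg p b M z z⁻¹ (M+1) (by omega)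
  rw [← h]
  have e : ∀ i ∈ Finset.range (M+1), GG p b M z i * GG p b M z⁻¹ i =
      rescale (p ^ i) (phi p (p^b) z * phi p (p^b) z⁻¹) * 
      rescale (p^(M+b)) (phi p (p⁻¹ ^ (M+b)) z * phi p (p⁻¹ ^ (M+b)) z⁻¹) := by
    intro i hi
    have hi : i ≤ M := by simp at hi; omega
    unfold GG
    rw [← phi_mul p hp p0 i M b _ hi, ← phi_mul p hp p0 i M b _ hi]
    simp only [map_mul, ← phi_rescale, mul_comm _ (p^i)]
    ring
  have e2 : SS p b M z z⁻¹ = ∑ i ∈ Finset.range (M + 1), ec p M i • ((p ^ (2 * b * i)) • (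
      rescale (p ^ i) (phi p (p^b) z * phi p (p^b) z⁻¹) * 
      rescale (p^(M+b)) (phi p (p⁻¹ ^ (M+b)) z * phi p (p⁻¹ ^ (M+b)) z⁻¹))) := by
    unfold SS
    apply Finset.sum_congr rfl
    intro i hi
    rw [e i hi]
  rw [e2, map_sum]
  simp only [PowerSeries.coeff_smul, PowerSeries.coeff_mul (n := M+1), PowerSeries.coeff_rescale, phi_phi p _ z hz]
  simp only [Finset.Nat.sum_antidiagonal_eq_sum_range_succ_mk, Finset.smul_sum]
  rw [Finset.sum_comm]
  apply Finset.sum_congr rfl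
  intro s hs
  rw [← ec_qp, Finset.mul_sum, Finset.sum_mul]
  apply Finset.sum_congr rfl
  intro i hi
  simp only [smul_eq_mul]
  ring

theorem qdiff (q β : ℂ) (q0 : q ≠ 0) (hp : ∀ n, qp (q^2) (q^2) n ≠ 0) (N : ℕ) (z : ℂ) (hz : z ≠ 0) :
    (1 - β * z ^ 2) * Chat (q^2) β N (q * z) - (z ^ 2 - β) * Chat (q^2) β N (q⁻¹ * z) =
      (1 - z ^ 2) * ((q⁻¹ ^ N + β * q ^ N) * Chat (q^2) β N z) := by
  set c : ℕ → ℂ := fun r => qp β (q^2) r * qp β (q^2) (N - r) / (qp (q^2) (q^2) r * qp (q^2) (q^2) (N - r)) with hc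
  -- telescoping term
  set F : ℕ → ℂ := fun r => c r * (q⁻¹ ^ N * (1 - (q^2)^r) * (1 - β * q ^ (2 * (N:ℤ) - 2 * r))) * z ^ ((N:ℤ) - 2 * r + 2) with hF
  have hlast : ∀ r ∈ Finset.range (N+1), 
     (1 - β * z ^ 2) * (c r * (q * z) ^ ((N:ℤ) - 2 * r)) - (z ^ 2 - β) * (c r * (q⁻¹ * z) ^ ((N:ℤ) - 2 * r))
       - (1 - z ^ 2) * ((q⁻¹ ^ N + β * q ^ N) * (c r * z ^ ((N:ℤ) - 2 * r))) = 
      F r - c r * (q⁻¹ ^ N * (1 - β * (q^2)^r) * (1 - q ^ (2 * (N:ℤ) - 2 * r))) * z ^ ((N:ℤ) - 2 * r) := by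
    intro r hr
    simp only [hF]
    rw [mul_zpow, mul_zpow, zpow_add₀ hz, _root_.inv_zpow, zpow_sub₀ q0, zpow_sub₀ q0, mul_comm (2:ℤ) r, mul_comm (2:ℤ) N]
    simp only [_root_.zpow_mul, zpow_natCast]
    have h2 : ∀ m : ℕ, (q ^ m) ^ (2:ℤ) = (q ^ m)^2 := fun m => by norm_cast
    have h3 : z ^ (2:ℤ) = z ^ 2 := by norm_cast
    rw [h2, h2, h3, ← pow_mul q 2 r, mul_comm 2 r, pow_mul, inv_pow]
    field_simp
    ring
  have hnext : ∀ r ∈ Finset.range N, 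
     c r * (q⁻¹ ^ N * (1 - β * (q^2)^r) * (1 - q ^ (2 * (N:ℤ) - 2 * r))) * z ^ ((N:ℤ) - 2 * r) = F (r+1) := by
    intro r hr
    obtain ⟨m, rfl⟩ : ∃ m, N = r + 1 + m := ⟨N - (r+1), by simp at hr; omega⟩
    simp only [hF, hc]
    rw [show r + 1 + m - (r + 1) = m by omega, show r + 1 + m - r = m + 1 by omega]
    rw [qp_succ', qp_succ', qp_succ', qp_succ']
    have a1 := hp (r+1)
    have a2 := hp (m+1)
    rw [qp_succ'] at a1 a2
    have a3 := right_ne_zero_of_mul a1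
    have a4 := left_ne_zero_of_mul a1
    have a5 := right_ne_zero_of_mul a2
    have a6 := left_ne_zero_of_mul a2
    have e1 : q ^ (2 * ((r + 1 + m : ℕ):ℤ) - 2 * (r:ℤ)) = q^2 * (q^2)^m := by
      rw [show (2 * ((r + 1 + m : ℕ):ℤ) - 2 * (r:ℤ)) = ((2 + 2 * m : ℕ) : ℤ) by push_cast; ring, zpow_natCast, pow_add, pow_mul]
    have e2 : q ^ (2 * ((r + 1 + m : ℕ):ℤ) - 2 * ((r+1 : ℕ):ℤ)) = (q^2)^m := by
      rw [show (2 * ((r + 1 + m : ℕ):ℤ) - 2 * ((r+1 : ℕ):ℤ)) = ((2 * m : ℕ) : ℤ) by push_cast; ring, zpow_natCast, pow_mul]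
    have e3 : ((r + 1 + m : ℕ):ℤ) - 2 * ((r+1 : ℕ):ℤ) + 2 = ((r + 1 + m : ℕ):ℤ) - 2 * (r:ℤ) := by push_cast; ring
    rw [e1, e2, e3, pow_succ' (q^2) r]
    field_simp
  have key2 : ∑ r ∈ Finset.range (N+1), (F r - c r * (q⁻¹ ^ N * (1 - β * (q^2)^r) * (1 - q ^ (2 * (N:ℤ) - 2 * r))) * z ^ ((N:ℤ) - 2 * r)) = 0 := by
    rw [Finset.sum_sub_distrib, Finset.sum_range_succ', Finset.sum_range_succ (fun r => c r * _ * _), Finset.sum_congr rfl hnext]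
    simp [hF]
  rw [← sub_eq_zero, ← key2, ← Finset.sum_congr rfl hlast]
  simp only [Chat, Finset.sum_sub_distrib, Finset.mul_sum, hc]

end aux

theorem qpne (q : ℝ) (hq0 : 0 < q) (hq1 : q < 1) (n : ℕ) : qp ((q:ℂ)^2) ((q:ℂ)^2) n ≠ 0 := by
  unfold qp
  rw [Finset.prod_ne_zero_iff]
  intro j _ h
  have h2 : (1:ℝ) - q^2 * (q^2)^j = 0 := by exact_mod_cast h
  have h3 : (q^2)^(j+1) < 1 := pow_lt_one₀ (by positivity) (by nlinarith) (by omega)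
  rw [pow_succ'] at h3
  linarith

theorem sum_shift (L a k : ℕ) (hak : a ≤ k) (hk : k ≤ L) (f : ℕ → ℂ)
    (hf : ∀ m, ¬ (a ≤ m ∧ m ≤ k) → f m = 0) :
    ∑ m : Fin (L+1), f m = ∑ s ∈ Finset.range (k - a + 1), f (a + s) := by
  rw [Fin.sum_univ_eq_sum_range f (L+1)]
  have : ∑ m ∈ Finset.range (L+1), f m = ∑ m ∈ Finset.Ico a (k+1), f m := by
    symm
    apply Finset.sum_subset
    · intro m; simp; omega
    · intro m _ hm
      apply hf
      simp at hm; omega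
  rw [this, Finset.sum_Ico_eq_sum_range, show k + 1 - a = k - a + 1 by omega]

theorem Linv_mul (q : ℝ) (hq0 : 0 < q) (hq1 : q < 1) (L : ℕ)
    (C : ℂ → ℂ → ℕ → Polynomial ℂ) (hC : IsUltra C) (w : ℂ) (hw : w ≠ 0) :
    Linv (q:ℂ) L C ((w + w⁻¹)/2) * Lm (q:ℂ) L C ((w + w⁻¹)/2) = 1 := by
  have hp := qpne q hq0 hq1
  have q0 : (q:ℂ) ≠ 0 := by exact_mod_cast hq0.ne'
  have hev : ∀ p β n, (C p β n).eval ((w + w⁻¹) / 2) = Chat p β n w := fun p β n => (hC p β n).2 w hw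
  ext k a
  rw [Matrix.mul_apply]
  simp only [Linv, Lm, Matrix.of_apply, hev]
  rcases Nat.lt_trichotomy (k:ℕ) a with h | h | h
  · rw [Matrix.one_apply_ne (by intro e; subst e; omega)]
    apply Finset.sum_eq_zero
    intro m _
    by_cases h1 : (m:ℕ) ≤ k
    · rw [if_neg (show ¬ ((a:ℕ) ≤ m) by omega), mul_zero]
    · rw [if_neg h1, zero_mul]
  · obtain rfl : k = a := Fin.ext h
    rw [Matrix.one_apply_eq, Finset.sum_eq_single k]
    · have h1 := hp k
      have h2 := hp (2*k)
      have h3 := hp (2*k+1)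
      simp [Chat, qp_succ', ← two_mul]
      rw [qp_succ'] at h3
      simp [qp] at h1 h2 h3 ⊢
      field_simp
      exact div_self h3.2
    · intro m _ hm
      by_cases h1 : (m:ℕ) ≤ k
      · rw [if_neg (show ¬ ((k:ℕ) ≤ m) by intro h2; apply hm; ext; omega), mul_zero]
      · rw [if_neg h1, zero_mul]
    · simp
  · rw [Matrix.one_apply_ne (by intro e; subst e; omega)]
    have hkL := k.isLt
    generalize (k:ℕ) = k at *
    generalize (a:ℕ) = a at *
    obtain ⟨M, rfl⟩ : ∃ M, k = M + (a + 1) := ⟨k - (a+1), by omega⟩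
    refine (sum_shift L a (M + (a+1)) h.le (by omega) (fun m => (if m ≤ M + (a+1) then
          (q:ℂ) ^ ((2 * ((M + (a + 1) : ℕ) : ℤ) + 1) * (((M + (a + 1) : ℕ) : ℤ) - (m : ℤ))) *
            qp ((q:ℂ) ^ 2) ((q:ℂ) ^ 2) (M + (a + 1)) * qp ((q:ℂ) ^ 2) ((q:ℂ) ^ 2) (M + (a + 1) + m) /
              (qp ((q:ℂ) ^ 2) ((q:ℂ) ^ 2) (2 * (M + (a + 1))) * qp ((q:ℂ) ^ 2) ((q:ℂ) ^ 2) m) *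
            Chat ((q:ℂ) ^ 2) ((q:ℂ) ^ (-(2 * ((M + (a + 1) : ℕ) : ℤ)))) (M + (a + 1) - m) w
        else 0) *
        if a ≤ m then
          (q:ℂ) ^ ((m:ℤ) - (a:ℤ)) * qp ((q:ℂ) ^ 2) ((q:ℂ) ^ 2) m * qp ((q:ℂ) ^ 2) ((q:ℂ) ^ 2) (2 * a + 1) /
              (qp ((q:ℂ) ^ 2) ((q:ℂ) ^ 2) (m + a + 1) * qp ((q:ℂ) ^ 2) ((q:ℂ) ^ 2) a) *
            Chat ((q:ℂ) ^ 2) ((q:ℂ) ^ (2 * a + 2)) (m - a) w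
        else 0) ?_).trans ?_
    · intro m hm
      by_cases h1 : m ≤ M + (a+1)
      · rw [if_neg (show ¬ (a ≤ m) by omega), mul_zero]
      · rw [if_neg h1, zero_mul]
    have hk := key ((q:ℂ)^2) hp (pow_ne_zero _ q0) w hw M (a+1)
    rw [show M + (a+1) - a + 1 = M + 2 by omega]
    rw [← mul_zero ((q:ℂ)^(M+1) * qp ((q:ℂ)^2) ((q:ℂ)^2) (M+(a+1)) * qp ((q:ℂ)^2) ((q:ℂ)^2) (2*a+1) /
      (qp ((q:ℂ)^2) ((q:ℂ)^2) (2*(M+(a+1))) * qp ((q:ℂ)^2) ((q:ℂ)^2) a)), ← hk, Finset.mul_sum]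
    apply Finset.sum_congr rfl
    intro s hs
    have hs : s ≤ M + 1 := by simp at hs; omega
    rw [if_pos (by omega), if_pos (by omega)]
    have hadd := qp_add ((q:ℂ)^2) (2 * a + 1 + s) M
    rw [show M + (a+1) + (a+s) = 2*a+1+s+M by omega, hadd,
      show a + s + a + 1 = 2 * a + 1 + s by omega, show 2 * a + 1 + s + 1 = 2 * (a+1) + s by omega,
      show M + (a+1) - (a + s) = M + 1 - s by omega, show a + s - a = s by omega]
    have e1 : (q:ℂ) ^ ((2 * ((M + (a+1) : ℕ):ℤ) + 1) * (((M + (a+1) : ℕ):ℤ) - ((a + s : ℕ) : ℤ))) =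
        (q:ℂ)^(M+1-s) * ((q:ℂ)^2)^((M+(a+1))*(M+1-s)) := by
      rw [← pow_mul, ← pow_add, ← zpow_natCast]
      congr 1
      push_cast [Nat.cast_sub hs]
      ring
    have e2 : (q:ℂ) ^ (((a + s : ℕ) : ℤ) - (a:ℤ)) = (q:ℂ)^s := by
      rw [← zpow_natCast]; congr 1; push_cast; ring
    have e3 : (q:ℂ) ^ (-(2 * ((M + (a+1) : ℕ):ℤ))) = (((q:ℂ)^2)⁻¹)^(M+(a+1)) := by
      rw [_root_.zpow_neg, inv_pow, ← pow_mul, ← zpow_natCast]; push_cast; rfl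
    have e4 : (q:ℂ) ^ (2 * a + 2) = ((q:ℂ)^2)^(a+1) := by rw [← pow_mul]; ring_nf
    have e5 : (q:ℂ)^(M+1) = (q:ℂ)^(M+1-s) * (q:ℂ)^s := by rw [← pow_add]; congr 1; omega
    rw [e1, e2, e3, e4, e5]
    have h1 := hp (a+s)
    have h2 := hp (2*a+1+s)
    have h3 := hp a
    have h4 := hp (2*(M+(a+1)))
    field_simp

/-- decoupled coefficients -/
def cc (q : ℂ) (L n k j : ℕ) : ℂ := (-1 : ℂ) ^ k *
            q ^ ((n : ℤ) + (j : ℤ) * (2 * (k : ℤ) + 1) + 2 * (k : ℤ) * ((L : ℤ) + (n : ℤ) + 1) -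
                (k : ℤ) ^ 2) *
            (qp (q ^ (-(2 * (L : ℤ)))) (q ^ 2) k *
                qp (q ^ (-(2 * (j : ℤ) + 2 * (n : ℤ)))) (q ^ 2) k /
              (qp (q ^ 2) (q ^ 2) k * qp (q ^ (2 * (L : ℤ) + 4)) (q ^ 2) k)) *
            (qp (q ^ 2) (q ^ 2) (n + j - k) /
              qp (q ^ (4 * (k : ℤ) + 4)) (q ^ 2) (n + j - k)) *
            qRacah (q ^ 2) 1 1 (q ^ (-(2 * (n : ℤ) + 2 * (j : ℤ) + 2)))
              (q ^ (-(2 * (L : ℤ) + 2))) k j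

/-- decoupled matrix -/
def DD (q : ℂ) (L : ℕ) (C : ℂ → ℂ → ℕ → Polynomial ℂ) (n : ℕ) (x : ℂ) :
    Matrix (Fin (L + 1)) (Fin (L + 1)) ℂ := Matrix.of fun k j =>
  if (k:ℕ) ≤ n + j then cc q L n k j * (C (q ^ 2) (q ^ (2 * ((k:ℕ) : ℤ) + 2)) (n + (j : ℕ) - k)).eval x
  else 0

theorem evP_eq (q : ℂ) (q0 : q ≠ 0) (L : ℕ) (C : ℂ → ℂ → ℕ → Polynomial ℂ) (n : ℕ) (x : ℂ) :
    evP q L C n x = (Linv q L C x)ᵀ * DD q L C n x := by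
  ext i j
  rw [Matrix.mul_apply]
  simp only [evP, Pm, Matrix.map_apply, Matrix.of_apply, Matrix.transpose_apply, Linv, DD,
    Polynomial.eval_finsetSum]
  rw [Fin.sum_univ_eq_sum_range (fun k => (if (i:ℕ) ≤ k then
      q ^ ((2 * (k : ℤ) + 1) * ((k : ℤ) - ((i : ℕ) : ℤ))) *
          qp (q ^ 2) (q ^ 2) k * qp (q ^ 2) (q ^ 2) (k + (i : ℕ)) /
          (qp (q ^ 2) (q ^ 2) (2 * k) * qp (q ^ 2) (q ^ 2) (i : ℕ)) *
        (C (q ^ 2) (q ^ (-(2 * (k : ℤ)))) (k - (i : ℕ))).eval x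
    else 0) * (if k ≤ n + j then cc q L n k j * (C (q ^ 2) (q ^ (2 * (k : ℤ) + 2)) (n + (j : ℕ) - k)).eval x
  else 0)) (L+1)]
  have hsub : Finset.Icc (i : ℕ) (min L (n + (j : ℕ))) ⊆ Finset.range (L+1) := by
    intro k; simp; omega
  rw [← Finset.sum_subset hsub]
  · apply Finset.sum_congr rfl
    intro k hk
    have hk : (i:ℕ) ≤ k ∧ k ≤ L ∧ k ≤ n + j := by simpa using hk
    rw [if_pos hk.1, if_pos hk.2.2]
    simp only [Polynomial.eval_mul, Polynomial.eval_C, cc]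
    have e : q ^ ((n : ℤ) + (2 * (k : ℤ) + 1) * ((k : ℤ) - ((i : ℕ) : ℤ)) +
                ((j : ℕ) : ℤ) * (2 * (k : ℤ) + 1) + 2 * (k : ℤ) * ((L : ℤ) + (n : ℤ) + 1) -
                (k : ℤ) ^ 2) = q ^ ((2 * (k : ℤ) + 1) * ((k : ℤ) - ((i : ℕ) : ℤ))) *
          q ^ ((n : ℤ) + ((j:ℕ) : ℤ) * (2 * (k : ℤ) + 1) + 2 * (k : ℤ) * ((L : ℤ) + (n : ℤ) + 1) -
                (k : ℤ) ^ 2) := by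
      rw [← zpow_add₀ q0]; congr 1; ring
    rw [e]
    ring
  · intro k hk hk2
    by_cases h1 : (i:ℕ) ≤ k
    · rw [if_neg (show ¬ (k ≤ n + j) by simp at hk hk2; omega), mul_zero]
    · rw [if_neg h1, zero_mul]

theorem Rmat_eq (q : ℝ) (hq0 : 0 < q) (hq1 : q < 1) (L : ℕ)
    (C : ℂ → ℂ → ℕ → Polynomial ℂ) (hC : IsUltra C) (n : ℕ) (w : ℂ) (hw : w ≠ 0) :
    Rmat (q:ℂ) L C n ((w + w⁻¹)/2) = DD (q:ℂ) L C n ((w + w⁻¹)/2) * (Gam (q:ℂ) L n)⁻¹ := by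
  have q0 : (q:ℂ) ≠ 0 := by exact_mod_cast hq0.ne'
  rw [Rmat, evP_eq _ q0, ← Matrix.mul_assoc, ← Matrix.transpose_mul, Linv_mul q hq0 hq1 L C hC w hw]
  simp

/-- conjugation by `L(x)ᵀ` decouples the first q-difference operator:
`K₁(z) R_n(μ(qz)) + K₁(z⁻¹) R_n(μ(q⁻¹z)) = R_n(μ(z)) Λ_n(1)` where
`R_n(x) = L(x)ᵀ P_n(x) Γ_n⁻¹`. -/
theorem stmt12 (q : ℝ) (hq0 : 0 < q) (hq1 : q < 1) (L : ℕ)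
    (C : ℂ → ℂ → ℕ → Polynomial ℂ) (hC : IsUltra C) (n : ℕ)
    (z : ℂ) (hz0 : z ≠ 0) (hz1 : z ≠ 1) (hz2 : z ≠ -1) :
    K1f (q : ℂ) L z * Rmat (q : ℂ) L C n (((q : ℂ) * z + ((q : ℂ) * z)⁻¹) / 2) +
        K1f (q : ℂ) L z⁻¹ *
          Rmat (q : ℂ) L C n (((q : ℂ)⁻¹ * z + ((q : ℂ)⁻¹ * z)⁻¹) / 2) =
      Rmat (q : ℂ) L C n ((z + z⁻¹) / 2) * Lam1 (q : ℂ) L n := by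
  have q0 : (q:ℂ) ≠ 0 := by exact_mod_cast hq0.ne'
  have hp := qpne q hq0 hq1
  rw [Rmat_eq q hq0 hq1 L C hC n _ hz0, Rmat_eq q hq0 hq1 L C hC n _ (mul_ne_zero q0 hz0),
    Rmat_eq q hq0 hq1 L C hC n _ (mul_ne_zero (inv_ne_zero q0) hz0)]
  have hcomm : (Gam (q:ℂ) L n)⁻¹ * Lam1 (q:ℂ) L n = Lam1 (q:ℂ) L n * (Gam (q:ℂ) L n)⁻¹ := by
    unfold Gam Lam1
    rw [Matrix.inv_diagonal, Matrix.diagonal_mul_diagonal, Matrix.diagonal_mul_diagonal]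
    congr 1; ext i; ring
  rw [Matrix.mul_assoc (DD _ _ _ _ _), hcomm, ← Matrix.mul_assoc, ← Matrix.mul_assoc, ← Matrix.mul_assoc,
    ← Matrix.add_mul]
  congr 1
  ext k j
  have hev : ∀ w : ℂ, w ≠ 0 → ∀ p β n, (C p β n).eval ((w + w⁻¹) / 2) = Chat p β n w :=
    fun w hw p β n => (hC p β n).2 w hw
  simp only [Matrix.add_apply, K1f, Lam1, Matrix.diagonal_mul, Matrix.mul_diagonal, DD, Matrix.of_apply]
  by_cases h : (k:ℕ) ≤ n + j
  swap
  · simp [h]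
  simp only [if_pos h, hev z hz0, hev _ (mul_ne_zero q0 hz0), hev _ (mul_ne_zero (inv_ne_zero q0) hz0)]
  generalize cc (q:ℂ) L n k j = c
  generalize (k:ℕ) = k at *
  generalize (j:ℕ) = j at *
  obtain ⟨N, hN⟩ : ∃ N, n + j = k + N := ⟨n + j - k, by omega⟩
  have hβ : (q:ℂ) ^ (2 * (k:ℤ) + 2) = (q:ℂ) ^ (2 * k + 2) := by
    rw [← zpow_natCast]; push_cast; rfl
  rw [hN, show k + N - k = N by omega, hβ]
  have hd := qdiff (q:ℂ) ((q:ℂ) ^ (2 * k + 2)) q0 hp N z hz0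
  have e1 : (q:ℂ) ^ (-(j:ℤ) - (n:ℤ) - 1) = ((q:ℂ)^k * (q:ℂ)^N * q)⁻¹ := by
    rw [show -(j:ℤ) - (n:ℤ) - 1 = -((k + N + 1 : ℕ):ℤ) by push_cast; omega, _root_.zpow_neg, zpow_natCast]
    ring
  have e2 : (q:ℂ) ^ ((j:ℤ) + (n:ℤ) + 1) = (q:ℂ)^k * (q:ℂ)^N * q := by
    rw [show (j:ℤ) + (n:ℤ) + 1 = ((k + N + 1 : ℕ):ℤ) by push_cast; omega, zpow_natCast]
    ring
  have e3 : (q:ℂ) ^ (1 - (k:ℤ)) = q / (q:ℂ)^k := by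
    rw [zpow_sub₀ q0, zpow_natCast, zpow_one]
  have hz3 : 1 - z ^ 2 ≠ 0 := by
    intro h
    have : (1 - z) * (1 + z) = 0 := by rw [← h]; ring
    rcases mul_eq_zero.1 this with h | h
    · exact hz1 (by linear_combination -h)
    · exact hz2 (by linear_combination h)
  have hq2 : 1 - (q:ℂ)^2 ≠ 0 := by
    have := hp 1
    simpa [qp] using this
  rw [e1, e2, e3]
  have e4 : (1 - (q:ℂ) ^ (2 * k + 2) * z⁻¹ ^ 2) / (1 - z⁻¹ ^ 2) = -((z^2 - (q:ℂ) ^ (2 * k + 2)) / (1 - z ^ 2)) := by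
    have : 1 - z⁻¹ ^ 2 ≠ 0 := by
      intro h
      apply hz3
      field_simp at h
      linear_combination -h
    rw [← neg_div, div_eq_div_iff this hz3]
    field_simp
    ring
  have e5 : ((q:ℂ)⁻¹ - q)^2 = (1 - (q:ℂ)^2)^2 / q^2 := by field_simp
  rw [e4, e5]
  generalize Chat _ _ N ((q:ℂ) * z) = A at *
  generalize Chat _ _ N ((q:ℂ)⁻¹ * z) = B at *
  generalize Chat _ _ N z = D at *
  have e6 : (q:ℂ) ^ (2 * k + 2) = ((q:ℂ)^k)^2 * q^2 := by ring
  rw [inv_pow] at hd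
  calc _ = (q:ℂ) / (q:ℂ)^k / (1 - (q:ℂ)^2)^2 * c / (1 - z^2) *
        ((1 - (q:ℂ) ^ (2 * k + 2) * z ^ 2) * A - (z ^ 2 - (q:ℂ) ^ (2 * k + 2)) * B) := by ring
    _ = _ := by
      rw [hd, e6]
      field_simp

end
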